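/- Existence and uniqueness of exterior harmonic maps with prescribed asymptotics: for ℓ ∈ N, n ∈ N, and any α ∈ R, there exists a unique solution Q on [1,∞) of the ODE Q'' + (2/r) Q' = (ℓ(ℓ+1)/(2r²)) sin(2Q) satisfying Q(r) = nπ − α/r^{ℓ+1} + O(r^{−3(ℓ+1)}) as r → ∞, where the error term is uniquely determined by α and vanishes when α = 0. -/

import Mathlib

open Asymptotics Filter

/-!
In the inverted radius `x = 1 / r`, a function `Q r = ψ x` is an exterior harmonic map when
`x² ψ'' = (ℓ(ℓ+1)/2) sin 2ψ` on `(0, 1)`. The friction term has disappeared, and the linear part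
`x² ψ'' = ℓ(ℓ+1) ψ` has the decaying solution `x ^ (ℓ + 1)`. Writing `ψ = nπ - α x ^ (ℓ + 1) + e`
turns the equation into an Euler equation `x² e'' = F(x, e)`, in which `F(x, ·)` is Lipschitz with
constant `c = ℓ(ℓ+1)` and `F(x, 0) = O(x ^ q)` for `q = 3(ℓ+1)`, because `sin t - t = O(t³)`.

Integrating twice from `0` maps a bound `C x ^ (q - 2)` to `C / (q (q - 1)) x ^ q`. As
`c < q (q - 1)`, the Picard operator of the Euler equation is a contraction for the norm
`sup ‖e x‖ / x ^ q`, which gives a solution on all of `(0, ∞)`. The same estimate, iterated on the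
difference of two solutions, shows that it is the only one that is `O(x ^ q)` at `0`.
-/

open Function Set
open scoped NNReal Topology BoundedContinuousFunction

section PowerBounds

variable {E : Type*} [NormedAddCommGroup E] {b q : ℝ} {d : ℝ → E}

theorem isLittleO_rpow_id_nhdsGT_zero (hq : 1 < q) :
    (fun x : ℝ => x ^ q) =o[𝓝[>] 0] fun x => x := by
  refine (isLittleO_iff_tendsto' ?_).2 ?_
  · filter_upwards [self_mem_nhdsWithin] with x hx h0 using absurd h0 (ne_of_gt hx)
  · have h : Tendsto (fun x : ℝ => x ^ (q - 1)) (𝓝[>] 0) (𝓝 0) := by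
      have := (Real.continuousAt_rpow_const 0 (q - 1) (.inr (by linarith))).tendsto
      rw [Real.zero_rpow (by linarith)] at this
      exact this.mono_left nhdsWithin_le_nhds
    refine h.congr' ?_
    filter_upwards [self_mem_nhdsWithin] with x hx using Real.rpow_sub_one (ne_of_gt hx) q

theorem isLittleO_id_of_norm_le_rpow {C : ℝ} (hq : 1 < q) (hb : 0 < b)
    (hd : ∀ x ∈ Ioo 0 b, ‖d x‖ ≤ C * x ^ q) : d =o[𝓝[>] 0] fun x => x := by
  refine (IsBigO.of_bound C ?_).trans_isLittleO (isLittleO_rpow_id_nhdsGT_zero hq)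
  filter_upwards [Ioo_mem_nhdsGT hb] with x hx
  rw [Real.norm_of_nonneg (Real.rpow_nonneg hx.1.le q)]
  exact hd x hx

theorem exists_norm_le_rpow_of_isBigO (hd : ContinuousOn d (Ioo 0 b))
    (hO : d =O[𝓝[>] 0] fun x => x ^ q) {a : ℝ} (ha : a < b) :
    ∃ M, ∀ x ∈ Ioo 0 a, ‖d x‖ ≤ M * x ^ q := by
  obtain ⟨C, hC⟩ := hO.bound
  obtain ⟨δ, hδ, hCδ⟩ := mem_nhdsGT_iff_exists_Ioo_subset.1 hC
  have hsub : Icc δ a ⊆ Ioo 0 b := Icc_subset_Ioo hδ ha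
  obtain ⟨B, hB⟩ := isCompact_Icc.exists_bound_of_continuousOn (s := Icc δ a)
    (f := fun x => ‖d x‖ / x ^ q) ((hd.mono hsub).norm.div
      (continuousOn_id.rpow_const fun x hx => .inl (hsub hx).1.ne')
      fun x hx => (Real.rpow_pos_of_pos (hsub hx).1 q).ne')
  refine ⟨max C B, fun x hx => ?_⟩
  have hxq : 0 < x ^ q := Real.rpow_pos_of_pos hx.1 q
  rcases lt_or_ge x δ with hxδ | hxδ
  · have h : ‖d x‖ ≤ C * ‖x ^ q‖ := hCδ ⟨hx.1, hxδ⟩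
    rw [Real.norm_of_nonneg hxq.le] at h
    exact h.trans (by gcongr; exact le_max_left C B)
  · have h := hB x ⟨hxδ, hx.2.le⟩
    rw [norm_div, norm_norm, Real.norm_of_nonneg hxq.le, div_le_iff₀ hxq] at h
    exact h.trans (by gcongr; exact le_max_right C B)

end PowerBounds

section SecondPrimitive

variable {E : Type*} [NormedAddCommGroup E] [NormedSpace ℝ E] {b C p q : ℝ} {g : ℝ → E}

theorem norm_integral_le_of_norm_le_rpow {x : ℝ} (hp : -1 < p) (hx : 0 ≤ x)
    (hC : ∀ y ∈ Ioc 0 x, ‖g y‖ ≤ C * y ^ p) :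
    ‖∫ y in 0..x, g y‖ ≤ C / (p + 1) * x ^ (p + 1) := by
  refine (intervalIntegral.norm_integral_le_of_norm_le hx (.of_forall hC)
    ((intervalIntegral.intervalIntegrable_rpow' hp).const_mul C)).trans_eq ?_
  rw [intervalIntegral.integral_const_mul, integral_rpow (.inl hp),
    Real.zero_rpow (by linarith), sub_zero, mul_div_assoc', div_mul_eq_mul_div]

theorem hasDerivAt_integral_of_norm_le_rpow [CompleteSpace E] {x : ℝ} (hp : -1 < p)
    (hg : ContinuousOn g (Ioo 0 b)) (hC : ∀ y ∈ Ioo 0 b, ‖g y‖ ≤ C * y ^ p) (hx : x ∈ Ioo 0 b) :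
    HasDerivAt (fun t => ∫ y in 0..t, g y) (g x) x := by
  have hsub : uIoc 0 x ⊆ Ioo 0 b := by
    rw [uIoc_of_le hx.1.le]
    exact fun y hy => ⟨hy.1, hy.2.trans_lt hx.2⟩
  have hint : IntervalIntegrable g MeasureTheory.volume 0 x :=
    ((intervalIntegral.intervalIntegrable_rpow' hp).const_mul C).mono_fun'
      ((hg.mono hsub).aestronglyMeasurable measurableSet_uIoc)
      ((MeasureTheory.ae_restrict_iff' measurableSet_uIoc).2
        (.of_forall fun y hy => hC y (hsub hy)))
  exact intervalIntegral.integral_hasDerivAt_right hint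
    (hg.stronglyMeasurableAtFilter isOpen_Ioo x hx) (hg.continuousAt (isOpen_Ioo.mem_nhds hx))

/-- The second primitive of `g` that vanishes to first order at `0`. -/
noncomputable def secondPrimitive (g : ℝ → E) (x : ℝ) : E := ∫ y in 0..x, ∫ z in 0..y, g z

theorem norm_primitive_le_of_norm_le_rpow_sub_two {y : ℝ} (hq : 1 < q)
    (hC : ∀ z ∈ Ioo 0 b, ‖g z‖ ≤ C * z ^ (q - 2)) (hy : y ∈ Ioo 0 b) :
    ‖∫ z in 0..y, g z‖ ≤ C / (q - 1) * y ^ (q - 1) := by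
  have h := norm_integral_le_of_norm_le_rpow (p := q - 2) (by linarith) hy.1.le
    fun z hz => hC z ⟨hz.1, hz.2.trans_lt hy.2⟩
  rwa [show q - 2 + 1 = q - 1 by ring] at h

theorem norm_secondPrimitive_le {x : ℝ} (hq : 1 < q)
    (hC : ∀ y ∈ Ioo 0 b, ‖g y‖ ≤ C * y ^ (q - 2)) (hx : x ∈ Ioo 0 b) :
    ‖secondPrimitive g x‖ ≤ C / (q * (q - 1)) * x ^ q := by
  have h := norm_integral_le_of_norm_le_rpow (p := q - 1) (by linarith) hx.1.le
    fun y hy => norm_primitive_le_of_norm_le_rpow_sub_two hq hC ⟨hy.1, hy.2.trans_lt hx.2⟩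
  rwa [sub_add_cancel, div_div, mul_comm (q - 1)] at h

theorem hasDerivAt_primitive_of_norm_le_rpow_sub_two [CompleteSpace E] {x : ℝ} (hq : 1 < q)
    (hg : ContinuousOn g (Ioo 0 b)) (hC : ∀ y ∈ Ioo 0 b, ‖g y‖ ≤ C * y ^ (q - 2))
    (hx : x ∈ Ioo 0 b) : HasDerivAt (fun y => ∫ z in 0..y, g z) (g x) x :=
  hasDerivAt_integral_of_norm_le_rpow (by linarith) hg hC hx

theorem hasDerivAt_secondPrimitive [CompleteSpace E] {x : ℝ} (hq : 1 < q)
    (hg : ContinuousOn g (Ioo 0 b)) (hC : ∀ y ∈ Ioo 0 b, ‖g y‖ ≤ C * y ^ (q - 2))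
    (hx : x ∈ Ioo 0 b) : HasDerivAt (secondPrimitive g) (∫ z in 0..x, g z) x :=
  hasDerivAt_integral_of_norm_le_rpow (by linarith)
    (fun _ hy => (hasDerivAt_primitive_of_norm_le_rpow_sub_two hq hg hC
      hy).continuousAt.continuousWithinAt)
    (fun _ hy => norm_primitive_le_of_norm_le_rpow_sub_two hq hC hy) hx

theorem eqOn_zero_of_deriv2_eq_zero_of_isLittleO {h h' : ℝ → E}
    (hh : ∀ x ∈ Ioo 0 b, HasDerivAt h (h' x) x) (hh' : ∀ x ∈ Ioo 0 b, HasDerivAt h' 0 x)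
    (ho : h =o[𝓝[>] 0] fun x => x) : EqOn h 0 (Ioo 0 b) := by
  intro x hx
  have hmem : Ioo 0 b ∈ 𝓝[>] (0 : ℝ) := Ioo_mem_nhdsGT (hx.1.trans hx.2)
  obtain ⟨v, hv⟩ := isOpen_Ioo.exists_is_const_of_deriv_eq_zero isPreconnected_Ioo
    (fun y hy => (hh' y hy).differentiableAt.differentiableWithinAt) fun y hy => (hh' y hy).deriv
  have haff (y : ℝ) (hy : y ∈ Ioo 0 b) : HasDerivAt (fun y => h y - y • v) 0 y :=
    ((hh y hy).fun_sub ((hasDerivAt_id y).smul_const v)).congr_deriv (by simp [hv y hy])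
  obtain ⟨a, ha⟩ := isOpen_Ioo.exists_is_const_of_deriv_eq_zero isPreconnected_Ioo
    (fun y hy => (haff y hy).differentiableAt.differentiableWithinAt) fun y hy => (haff y hy).deriv
  have hid : Tendsto (fun y : ℝ => y) (𝓝[>] 0) (𝓝 0) :=
    tendsto_id.mono_left nhdsWithin_le_nhds
  have ha0 : a = 0 := by
    have hlim : Tendsto (fun y => h y - y • v) (𝓝[>] 0) (𝓝 0) := by
      simpa using (ho.isBigO.trans_tendsto hid).sub (hid.smul_const v)
    exact tendsto_nhds_unique
      (tendsto_const_nhds.congr' (by filter_upwards [hmem] with y hy using (ha y hy).symm)) hlim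
  have hlin (y : ℝ) (hy : y ∈ Ioo 0 b) : h y = y • v := by
    rw [← sub_eq_zero, ha y hy, ha0]
  have hv0 : v = 0 := by
    refine tendsto_nhds_unique (tendsto_const_nhds.congr' ?_) ho.tendsto_inv_smul_nhds_zero
    filter_upwards [hmem] with y hy
    rw [hlin y hy, inv_smul_smul₀ hy.1.ne']
  rw [hlin x hx, hv0, smul_zero, Pi.zero_apply]

theorem norm_le_rpow_of_norm_deriv2_le_rpow [CompleteSpace E] {d d' : ℝ → E} (hq : 1 < q)
    (hd : ∀ x ∈ Ioo 0 b, HasDerivAt d (d' x) x) (hd' : ∀ x ∈ Ioo 0 b, HasDerivAt d' (g x) x)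
    (hg : ContinuousOn g (Ioo 0 b)) (hC : ∀ x ∈ Ioo 0 b, ‖g x‖ ≤ C * x ^ (q - 2))
    (ho : d =o[𝓝[>] 0] fun x => x) {x : ℝ} (hx : x ∈ Ioo 0 b) :
    ‖d x‖ ≤ C / (q * (q - 1)) * x ^ q := by
  have hP (y : ℝ) (hy : y ∈ Ioo 0 b) := norm_secondPrimitive_le hq hC hy
  have hzero := eqOn_zero_of_deriv2_eq_zero_of_isLittleO
    (fun y hy => (hd y hy).sub (hasDerivAt_secondPrimitive hq hg hC hy))
    (fun y hy => ((hd' y hy).fun_sub (hasDerivAt_primitive_of_norm_le_rpow_sub_two hq hg hC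
      hy)).congr_deriv (sub_self _))
    (ho.sub (isLittleO_id_of_norm_le_rpow hq (hx.1.trans hx.2) hP))
  rw [sub_eq_zero.1 (hzero hx)]
  exact hP x hx

theorem eqOn_zero_of_sq_mul_norm_deriv2_le [CompleteSpace E] {d d' : ℝ → E} {c : ℝ} (hq : 1 < q)
    (hc : 0 ≤ c) (hcq : c < q * (q - 1)) (hd : ∀ x ∈ Ioo 0 b, HasDerivAt d (d' x) x)
    (hd' : ∀ x ∈ Ioo 0 b, HasDerivAt d' (g x) x) (hg : ContinuousOn g (Ioo 0 b))
    (hgd : ∀ x ∈ Ioo 0 b, x ^ 2 * ‖g x‖ ≤ c * ‖d x‖) (hO : d =O[𝓝[>] 0] fun x => x ^ q) :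
    EqOn d 0 (Ioo 0 b) := by
  intro x hx
  obtain ⟨a, hxa, hab⟩ := exists_between hx.2
  have hsub : Ioo 0 a ⊆ Ioo 0 b := Ioo_subset_Ioo_right hab.le
  obtain ⟨M, hM⟩ := exists_norm_le_rpow_of_isBigO
    (fun y hy => (hd y hy).continuousAt.continuousWithinAt) hO hab
  set θ := c / (q * (q - 1)) with hθ
  have hθ0 : 0 ≤ θ := div_nonneg hc (hc.trans hcq.le)
  have hθ1 : θ < 1 := (div_lt_one (hc.trans_lt hcq)).2 hcq
  have iter (k : ℕ) : ∀ y ∈ Ioo 0 a, ‖d y‖ ≤ θ ^ k * M * y ^ q := by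
    induction k with
    | zero => simpa using hM
    | succ k ih =>
      intro y hy
      have hgk (z : ℝ) (hz : z ∈ Ioo 0 a) : ‖g z‖ ≤ c * (θ ^ k * M) * z ^ (q - 2) := by
        rw [Real.rpow_sub hz.1, Real.rpow_two, mul_div_assoc', le_div_iff₀' (pow_pos hz.1 2),
          mul_assoc]
        exact (hgd z (hsub hz)).trans (mul_le_mul_of_nonneg_left (ih z hz) hc)
      refine (norm_le_rpow_of_norm_deriv2_le_rpow hq (fun z hz => hd z (hsub hz))
        (fun z hz => hd' z (hsub hz)) (hg.mono hsub) hgk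
        (hO.trans_isLittleO (isLittleO_rpow_id_nhdsGT_zero hq)) hy).trans_eq ?_
      rw [pow_succ, hθ]
      ring
  have hlim : Tendsto (fun k : ℕ => θ ^ k * M * x ^ q) atTop (𝓝 0) := by
    simpa using ((tendsto_pow_atTop_nhds_zero_of_lt_one hθ0 hθ1).mul_const M).mul_const (x ^ q)
  exact norm_le_zero_iff.1 (ge_of_tendsto' hlim fun k => iter k x ⟨hx.1, hxa⟩)

end SecondPrimitive

section EulerEquation

variable {E : Type*} [NormedAddCommGroup E] [NormedSpace ℝ E] {F : ℝ → E → E} {u v : ℝ → E}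
  {c : ℝ≥0} {q x K M : ℝ} {s : Set ℝ}

/-- The right-hand side of the Euler equation `x² u'' = F(x, u)` solved for `u''`, along `u`. -/
noncomputable def eulerSource (F : ℝ → E → E) (u : ℝ → E) (x : ℝ) : E := (x ^ 2)⁻¹ • F x (u x)

/-- `u` is a twice differentiable solution of the Euler equation `x² u'' = F(x, u)` on `s`.
Derivatives are two-sided, so `s` is meant to be open. -/
def SolvesEulerOn (F : ℝ → E → E) (u : ℝ → E) (s : Set ℝ) : Prop :=
  ∃ u' : ℝ → E, ∀ x ∈ s, HasDerivAt u (u' x) x ∧ HasDerivAt u' (eulerSource F u x) x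

theorem SolvesEulerOn.continuousOn (hu : SolvesEulerOn F u s) : ContinuousOn u s := by
  obtain ⟨_, hu'⟩ := hu
  exact fun x hx => (hu' x hx).1.continuousAt.continuousWithinAt

theorem continuousOn_eulerSource (hs : s ⊆ Ioi 0) (hF : ContinuousOn (uncurry F) (s ×ˢ univ))
    (hu : ContinuousOn u s) : ContinuousOn (eulerSource F u) s :=
  ((continuousOn_id.pow 2).inv₀ fun _ hx => pow_ne_zero 2 (ne_of_gt (hs hx))).smul
    (hF.comp (continuousOn_id.prodMk hu) fun _ hx => ⟨hx, mem_univ _⟩)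

theorem sq_mul_norm_eulerSource_sub_le (hF : LipschitzWith c (F x)) (hx : x ≠ 0) :
    x ^ 2 * ‖eulerSource F u x - eulerSource F v x‖ ≤ c * ‖u x - v x‖ := by
  rw [eulerSource, eulerSource, ← smul_sub, norm_smul, norm_inv,
    Real.norm_of_nonneg (sq_nonneg x), mul_inv_cancel_left₀ (pow_ne_zero 2 hx)]
  exact hF.norm_sub_le _ _

theorem norm_eulerSource_sub_le (hF : LipschitzWith c (F x)) (hx : 0 < x)
    (hM : ‖u x - v x‖ ≤ M * x ^ q) :
    ‖eulerSource F u x - eulerSource F v x‖ ≤ c * M * x ^ (q - 2) := by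
  rw [Real.rpow_sub hx, Real.rpow_two, mul_div_assoc', le_div_iff₀' (pow_pos hx 2), mul_assoc]
  exact (sq_mul_norm_eulerSource_sub_le hF hx.ne').trans (by gcongr)

theorem norm_eulerSource_le (hF : LipschitzWith c (F x)) (hx : 0 < x)
    (hK : ‖F x 0‖ ≤ K * x ^ q) (hM : ‖u x‖ ≤ M * x ^ q) :
    ‖eulerSource F u x‖ ≤ (K + c * M) * x ^ (q - 2) := by
  have h0 : ‖eulerSource F 0 x‖ ≤ K * x ^ (q - 2) := by
    rw [eulerSource, norm_smul, norm_inv, Real.norm_of_nonneg (sq_nonneg x), Real.rpow_sub hx,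
      Real.rpow_two, inv_mul_le_iff₀ (pow_pos hx 2), mul_div_assoc',
      mul_div_cancel₀ _ (pow_ne_zero 2 hx.ne')]
    exact hK
  calc ‖eulerSource F u x‖ ≤ ‖eulerSource F u x - eulerSource F 0 x‖ + ‖eulerSource F 0 x‖ :=
        norm_le_norm_sub_add _ _
    _ ≤ c * M * x ^ (q - 2) + K * x ^ (q - 2) :=
        add_le_add (norm_eulerSource_sub_le hF hx (by simpa using hM)) h0
    _ = (K + c * M) * x ^ (q - 2) := by ring

theorem SolvesEulerOn.contDiffOn_two (hu : SolvesEulerOn F u s) (hs : IsOpen s) (hs0 : s ⊆ Ioi 0)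
    (hF : ContinuousOn (uncurry F) (s ×ˢ univ)) : ContDiffOn ℝ 2 u s := by
  have hsource := continuousOn_eulerSource hs0 hF hu.continuousOn
  obtain ⟨u', hu'⟩ := hu
  have h1 : ContDiffOn ℝ (0 + 1) u' s := (contDiffOn_succ_iff_deriv_of_isOpen hs).2
    ⟨fun x hx => (hu' x hx).2.differentiableAt.differentiableWithinAt, by simp,
      contDiffOn_zero.2 (hsource.congr fun x hx => (hu' x hx).2.deriv)⟩
  rw [zero_add] at h1
  rw [← one_add_one_eq_two, contDiffOn_succ_iff_deriv_of_isOpen hs]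
  exact ⟨fun x hx => (hu' x hx).1.differentiableAt.differentiableWithinAt, by simp,
    h1.congr fun x hx => (hu' x hx).1.deriv⟩

/-- The function `x ↦ x ^ q • w (log x)` on the half-line `x > 0`. This identifies the bounded
continuous functions on `ℝ` with the continuous functions on `(0, ∞)` that are globally bounded by
a multiple of `x ^ q`. -/
noncomputable def powScale (q : ℝ) (w : ℝ → E) (x : ℝ) : E := x ^ q • w (Real.log x)

theorem continuousOn_powScale {w : ℝ → E} (hw : Continuous w) :
    ContinuousOn (powScale q w) (Ioi 0) :=
  (continuousOn_id.rpow_const fun _ hx => .inl (ne_of_gt hx)).smul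
    (hw.comp_continuousOn (Real.continuousOn_log.mono fun _ hx => ne_of_gt hx))

theorem norm_powScale_le {w : ℝ → E} (hM : ∀ s, ‖w s‖ ≤ M) (hx : 0 < x) :
    ‖powScale q w x‖ ≤ M * x ^ q := by
  have hxq := Real.rpow_nonneg hx.le q
  rw [powScale, norm_smul, Real.norm_of_nonneg hxq, mul_comm]
  exact mul_le_mul_of_nonneg_right (hM _) hxq

/-- The inverse of `powScale`, in the coordinate `s = log x`. -/
noncomputable def powUnscale (q : ℝ) (u : ℝ → E) (s : ℝ) : E :=
  (Real.exp s ^ q)⁻¹ • u (Real.exp s)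

theorem powScale_powUnscale (hx : 0 < x) : powScale q (powUnscale q u) x = u x := by
  rw [powScale, powUnscale, Real.exp_log hx, smul_inv_smul₀ (Real.rpow_pos_of_pos hx q).ne']

theorem continuous_powUnscale (hu : ContinuousOn u (Ioi 0)) : Continuous (powUnscale q u) :=
  ((Real.continuous_exp.rpow_const fun s => .inl (Real.exp_ne_zero s)).inv₀
    fun s => (Real.rpow_pos_of_pos (Real.exp_pos s) q).ne').smul
    (hu.comp_continuous Real.continuous_exp Real.exp_pos)

theorem norm_powUnscale_le (hM : ∀ x, 0 < x → ‖u x‖ ≤ M * x ^ q) (s : ℝ) :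
    ‖powUnscale q u s‖ ≤ M := by
  have hq := Real.rpow_pos_of_pos (Real.exp_pos s) q
  rw [powUnscale, norm_smul, norm_inv, Real.norm_of_nonneg hq.le, inv_mul_le_iff₀ hq, mul_comm]
  exact hM _ (Real.exp_pos s)

/-- The Picard operator of the Euler equation `x² u'' = F(x, u)` with vanishing data at `0`. -/
noncomputable def eulerPicard (F : ℝ → E → E) (u : ℝ → E) : ℝ → E :=
  secondPrimitive (eulerSource F u)

theorem norm_eulerPicard_le (hlip : ∀ x, 0 < x → LipschitzWith c (F x))
    (hK : ∀ x, 0 < x → ‖F x 0‖ ≤ K * x ^ q) (hq : 1 < q) (hM : ∀ x, 0 < x → ‖u x‖ ≤ M * x ^ q)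
    (hx : 0 < x) :
    ‖eulerPicard F u x‖ ≤ (K + c * M) / (q * (q - 1)) * x ^ q :=
  norm_secondPrimitive_le hq
    (fun y hy => norm_eulerSource_le (hlip y hy.1) hy.1 (hK y hy.1) (hM y hy.1))
    ⟨hx, lt_add_one x⟩

variable [CompleteSpace E]

theorem hasDerivAt_eulerPicard (hlip : ∀ x, 0 < x → LipschitzWith c (F x))
    (hK : ∀ x, 0 < x → ‖F x 0‖ ≤ K * x ^ q) (hq : 1 < q) (hM : ∀ x, 0 < x → ‖u x‖ ≤ M * x ^ q)
    (hF : ContinuousOn (uncurry F) (Ioi 0 ×ˢ univ)) (hu : ContinuousOn u (Ioi 0)) (hx : 0 < x) :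
    HasDerivAt (eulerPicard F u) (∫ y in 0..x, eulerSource F u y) x ∧
      HasDerivAt (fun x => ∫ y in 0..x, eulerSource F u y) (eulerSource F u x) x := by
  have hg : ContinuousOn (eulerSource F u) (Ioo 0 (x + 1)) :=
    (continuousOn_eulerSource le_rfl hF hu).mono Ioo_subset_Ioi_self
  have hb (y : ℝ) (hy : y ∈ Ioo 0 (x + 1)) :=
    norm_eulerSource_le (hlip y hy.1) hy.1 (hK y hy.1) (hM y hy.1)
  have hx1 : x ∈ Ioo 0 (x + 1) := ⟨hx, lt_add_one x⟩
  exact ⟨hasDerivAt_secondPrimitive hq hg hb hx1,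
    hasDerivAt_primitive_of_norm_le_rpow_sub_two hq hg hb hx1⟩

theorem norm_eulerPicard_sub_le {M' D : ℝ} (hlip : ∀ x, 0 < x → LipschitzWith c (F x))
    (hK : ∀ x, 0 < x → ‖F x 0‖ ≤ K * x ^ q) (hq : 1 < q) (hM : ∀ x, 0 < x → ‖u x‖ ≤ M * x ^ q)
    (hF : ContinuousOn (uncurry F) (Ioi 0 ×ˢ univ)) (hu : ContinuousOn u (Ioi 0))
    (hM' : ∀ x, 0 < x → ‖v x‖ ≤ M' * x ^ q) (hv : ContinuousOn v (Ioi 0))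
    (hD : ∀ x, 0 < x → ‖u x - v x‖ ≤ D * x ^ q) (hx : 0 < x) :
    ‖eulerPicard F u x - eulerPicard F v x‖ ≤ c * D / (q * (q - 1)) * x ^ q := by
  have hPu (y : ℝ) (hy : y ∈ Ioo 0 (x + 1)) := hasDerivAt_eulerPicard hlip hK hq hM hF hu hy.1
  have hPv (y : ℝ) (hy : y ∈ Ioo 0 (x + 1)) := hasDerivAt_eulerPicard hlip hK hq hM' hF hv hy.1
  have hb : 0 < x + 1 := by linarith
  refine norm_le_rpow_of_norm_deriv2_le_rpow hq
    (fun y hy => (hPu y hy).1.fun_sub (hPv y hy).1) (fun y hy => (hPu y hy).2.fun_sub (hPv y hy).2)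
    (((continuousOn_eulerSource le_rfl hF hu).fun_sub
      (continuousOn_eulerSource le_rfl hF hv)).mono Ioo_subset_Ioi_self)
    (fun y hy => norm_eulerSource_sub_le (hlip y hy.1) hy.1 (hD y hy.1))
    (IsLittleO.sub ?_ ?_) ⟨hx, lt_add_one x⟩
  · exact isLittleO_id_of_norm_le_rpow hq hb fun y hy =>
      norm_eulerPicard_le hlip hK hq hM hy.1
  · exact isLittleO_id_of_norm_le_rpow hq hb fun y hy =>
      norm_eulerPicard_le hlip hK hq hM' hy.1

theorem SolvesEulerOn.eqOn {b : ℝ} (hu : SolvesEulerOn F u (Ioo 0 b))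
    (hv : SolvesEulerOn F v (Ioo 0 b)) (hF : ContinuousOn (uncurry F) (Ioo 0 b ×ˢ univ))
    (hlip : ∀ x ∈ Ioo 0 b, LipschitzWith c (F x)) (hq : 1 < q) (hcq : c < q * (q - 1))
    (hO : (fun x => u x - v x) =O[𝓝[>] 0] fun x => x ^ q) : EqOn u v (Ioo 0 b) := by
  have hsource {w : ℝ → E} (hw : SolvesEulerOn F w (Ioo 0 b)) :
      ContinuousOn (eulerSource F w) (Ioo 0 b) :=
    continuousOn_eulerSource Ioo_subset_Ioi_self hF hw.continuousOn
  have hg := (hsource hu).fun_sub (hsource hv)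
  obtain ⟨u', hu'⟩ := hu
  obtain ⟨v', hv'⟩ := hv
  have hzero := eqOn_zero_of_sq_mul_norm_deriv2_le hq c.coe_nonneg hcq
    (fun x hx => (hu' x hx).1.fun_sub (hv' x hx).1)
    (fun x hx => (hu' x hx).2.fun_sub (hv' x hx).2) hg
    (fun x hx => sq_mul_norm_eulerSource_sub_le (hlip x hx) hx.1.ne') hO
  exact fun x hx => sub_eq_zero.1 (hzero hx)

theorem exists_eulerPicard_fixedPoint (hF : ContinuousOn (uncurry F) (Ioi 0 ×ˢ univ))
    (hlip : ∀ x, 0 < x → LipschitzWith c (F x)) (hK : ∀ x, 0 < x → ‖F x 0‖ ≤ K * x ^ q)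
    (hq : 1 < q) (hcq : c < q * (q - 1)) :
    ∃ w : ℝ →ᵇ E, powUnscale q (eulerPicard F (powScale q w)) = w := by
  have hbound (w : ℝ →ᵇ E) (x : ℝ) (hx : 0 < x) := norm_eulerPicard_le hlip hK hq
    (fun y hy => norm_powScale_le w.norm_coe_le_norm hy) hx
  have hcont (w : ℝ →ᵇ E) : ContinuousOn (eulerPicard F (powScale q w)) (Ioi 0) := fun x hx =>
    (hasDerivAt_eulerPicard hlip hK hq (fun y hy => norm_powScale_le w.norm_coe_le_norm hy) hF
      (continuousOn_powScale w.continuous) hx).1.continuousAt.continuousWithinAt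
  let T (w : ℝ →ᵇ E) : ℝ →ᵇ E := .ofNormedAddCommGroup
    (powUnscale q (eulerPicard F (powScale q w))) (continuous_powUnscale (hcont w)) _
    (norm_powUnscale_le (hbound w))
  have hq0 : 0 < q * (q - 1) := c.coe_nonneg.trans_lt hcq
  have hT : ContractingWith (c / ⟨q * (q - 1), hq0.le⟩) T := by
    refine ⟨(div_lt_one (by exact hq0)).2 hcq, LipschitzWith.of_dist_le_mul fun w₁ w₂ => ?_⟩
    refine (BoundedContinuousFunction.dist_le (by positivity)).2 fun s => ?_
    have hdiff := norm_powUnscale_le (u := fun x => eulerPicard F (powScale q w₁) x -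
      eulerPicard F (powScale q w₂) x) (q := q) (M := c * dist w₁ w₂ / (q * (q - 1)))
      (fun x hx => norm_eulerPicard_sub_le hlip hK hq
        (fun y hy => norm_powScale_le w₁.norm_coe_le_norm hy) hF
        (continuousOn_powScale w₁.continuous)
        (fun y hy => norm_powScale_le w₂.norm_coe_le_norm hy)
        (continuousOn_powScale w₂.continuous)
        (fun y hy => ?_) hx) s
    · rw [powUnscale, smul_sub, mul_div_right_comm] at hdiff
      rw [dist_eq_norm]
      exact hdiff
    · rw [dist_eq_norm, powScale, powScale, ← smul_sub]
      exact norm_powScale_le (w₁ - w₂).norm_coe_le_norm hy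
  exact ⟨hT.fixedPoint T, congrArg (fun w : ℝ →ᵇ E => (w : ℝ → E)) hT.fixedPoint_isFixedPt⟩

theorem exists_solvesEulerOn (hF : ContinuousOn (uncurry F) (Ioi 0 ×ˢ univ))
    (hlip : ∀ x, 0 < x → LipschitzWith c (F x)) (hK : ∀ x, 0 < x → ‖F x 0‖ ≤ K * x ^ q)
    (hq : 1 < q) (hcq : c < q * (q - 1)) :
    ∃ u, SolvesEulerOn F u (Ioi 0) ∧ ∀ x, 0 < x → ‖u x‖ ≤ K / (q * (q - 1) - c) * x ^ q := by
  obtain ⟨w, hw⟩ := exists_eulerPicard_fixedPoint hF hlip hK hq hcq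
  have hbound (x : ℝ) (hx : 0 < x) := norm_powScale_le (q := q) w.norm_coe_le_norm hx
  have hfix : EqOn (eulerPicard F (powScale q w)) (powScale q w) (Ioi 0) := fun x hx => by
    conv_rhs => rw [← hw]
    exact (powScale_powUnscale hx).symm
  have hderiv (x : ℝ) (hx : 0 < x) :=
    hasDerivAt_eulerPicard hlip hK hq hbound hF (continuousOn_powScale w.continuous) hx
  have hwK (s : ℝ) : ‖w s‖ ≤ (K + c * ‖w‖) / (q * (q - 1)) := by
    rw [← hw]
    exact norm_powUnscale_le (fun x hx => norm_eulerPicard_le hlip hK hq hbound hx) s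
  have hnorm : ‖w‖ ≤ K / (q * (q - 1) - c) := by
    have h := (w.norm_le ((norm_nonneg _).trans (hwK 0))).2 hwK
    rw [le_div_iff₀ (c.coe_nonneg.trans_lt hcq)] at h
    rw [le_div_iff₀ (sub_pos.2 hcq)]
    linarith
  exact ⟨powScale q w, ⟨_, fun x hx => ⟨(hderiv x hx).1.congr_of_eventuallyEq
    (hfix.symm.eventuallyEq_of_mem (Ioi_mem_nhds hx)), (hderiv x hx).2⟩⟩,
    fun x hx => (hbound x hx).trans (by gcongr)⟩

end EulerEquation

section Inversion

variable {f f' : ℝ → ℝ} {a r : ℝ}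

theorem hasDerivAt_comp_inv (hf : HasDerivAt f a r⁻¹) (hr : r ≠ 0) :
    HasDerivAt (fun r => f r⁻¹) (-a / r ^ 2) r :=
  (hf.comp r (hasDerivAt_inv hr)).congr_deriv (by ring)

theorem hasDerivAt_deriv_comp_inv (hf' : HasDerivAt f' a r⁻¹) (hr : r ≠ 0) :
    HasDerivAt (fun r => -f' r⁻¹ / r ^ 2) (a / r ^ 4 + 2 * f' r⁻¹ / r ^ 3) r := by
  refine ((hasDerivAt_comp_inv hf' hr).fun_neg.fun_div (hasDerivAt_pow 2 r)
    (pow_ne_zero 2 hr)).congr_deriv ?_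
  field_simp
  push_cast
  ring

end Inversion

section PendulumForce

variable {ℓ : ℝ}

/-- The force of the pendulum equation. In the inverted radius `x = 1 / r`, the equation of
exterior harmonic maps is `x² ψ'' = pendulumForce ℓ ψ`. -/
noncomputable def pendulumForce (ℓ t : ℝ) : ℝ := ℓ * (ℓ + 1) / 2 * Real.sin (2 * t)

theorem continuous_pendulumForce : Continuous (pendulumForce ℓ) := by
  unfold pendulumForce
  fun_prop

theorem pendulumForce_int_mul_pi_add (n : ℤ) (t : ℝ) :
    pendulumForce ℓ (n * Real.pi + t) = pendulumForce ℓ t := by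
  rw [pendulumForce, pendulumForce, ← Real.sin_add_int_mul_two_pi (2 * t) n]
  ring_nf

theorem lipschitzWith_pendulumForce (hℓ : 0 ≤ ℓ) :
    LipschitzWith (ℓ * (ℓ + 1)).toNNReal (pendulumForce ℓ) := by
  refine LipschitzWith.of_dist_le_mul fun s t => ?_
  rw [Real.coe_toNNReal _ (by positivity), Real.dist_eq, Real.dist_eq, pendulumForce,
    pendulumForce, ← mul_sub, abs_mul, abs_of_nonneg (by positivity : 0 ≤ ℓ * (ℓ + 1) / 2)]
  calc ℓ * (ℓ + 1) / 2 * |Real.sin (2 * s) - Real.sin (2 * t)|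
      ≤ ℓ * (ℓ + 1) / 2 * |2 * s - 2 * t| := by
        gcongr ?_ * ?_
        exact Real.abs_sin_sub_sin_le _ _
    _ = ℓ * (ℓ + 1) * |s - t| := by
        rw [← mul_sub, abs_mul, abs_two]
        ring

theorem abs_pendulumForce_sub_linear_le (hℓ : 0 ≤ ℓ) (t : ℝ) :
    |pendulumForce ℓ t - ℓ * (ℓ + 1) * t| ≤ 2 / 3 * (ℓ * (ℓ + 1)) * |t| ^ 3 := by
  have hfactor : pendulumForce ℓ t - ℓ * (ℓ + 1) * t =
      -(ℓ * (ℓ + 1) / 2 * (2 * t - Real.sin (2 * t))) := by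
    rw [pendulumForce]
    ring
  rw [hfactor, abs_neg, abs_mul, abs_of_nonneg (by positivity : 0 ≤ ℓ * (ℓ + 1) / 2)]
  calc ℓ * (ℓ + 1) / 2 * |2 * t - Real.sin (2 * t)|
      ≤ ℓ * (ℓ + 1) / 2 * (|2 * t| ^ 3 / 6) := by
        gcongr
        exact Real.abs_sub_sin_le _
    _ = 2 / 3 * (ℓ * (ℓ + 1)) * |t| ^ 3 := by
        rw [abs_mul, abs_two]
        ring

/-- The nonlinearity of the Euler equation for `e`, when `e - α x ^ (ℓ + 1)` solves
`x² ψ'' = pendulumForce ℓ ψ`. -/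
noncomputable def pendulumRemainder (ℓ α x e : ℝ) : ℝ :=
  pendulumForce ℓ (e - α * x ^ (ℓ + 1)) + ℓ * (ℓ + 1) * (α * x ^ (ℓ + 1))

theorem continuousOn_pendulumRemainder (α : ℝ) :
    ContinuousOn (uncurry (pendulumRemainder ℓ α)) (Ioi 0 ×ˢ univ) := by
  have hpow : ContinuousOn (fun z : ℝ × ℝ => α * z.1 ^ (ℓ + 1)) (Ioi 0 ×ˢ univ) :=
    continuousOn_const.mul (continuousOn_fst.rpow_const fun z hz => .inl (ne_of_gt hz.1))
  exact (continuous_pendulumForce.comp_continuousOn (continuousOn_snd.sub hpow)).add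
    (continuousOn_const.mul hpow)

theorem lipschitzWith_pendulumRemainder (hℓ : 0 ≤ ℓ) (α x : ℝ) :
    LipschitzWith (ℓ * (ℓ + 1)).toNNReal (pendulumRemainder ℓ α x) :=
  LipschitzWith.of_dist_le_mul fun s t => by
    simpa only [pendulumRemainder, dist_add_right, dist_sub_right] using
      (lipschitzWith_pendulumForce hℓ).dist_le_mul (s - α * x ^ (ℓ + 1)) (t - α * x ^ (ℓ + 1))

theorem norm_pendulumRemainder_zero_le (hℓ : 0 ≤ ℓ) (α : ℝ) {x : ℝ} (hx : 0 < x) :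
    ‖pendulumRemainder ℓ α x 0‖ ≤
      2 / 3 * (ℓ * (ℓ + 1)) * |α| ^ 3 * x ^ (3 * (ℓ + 1)) := by
  have hxℓ : 0 ≤ x ^ (ℓ + 1) := Real.rpow_nonneg hx.le _
  have h := abs_pendulumForce_sub_linear_le hℓ (-(α * x ^ (ℓ + 1)))
  rw [abs_neg, abs_mul, abs_of_nonneg hxℓ, mul_neg, sub_neg_eq_add, mul_pow] at h
  rwa [pendulumRemainder, zero_sub, Real.norm_eq_abs, mul_comm 3, Real.rpow_mul hx.le,
    Real.rpow_ofNat, mul_assoc _ (|α| ^ 3)]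

theorem SolvesEulerOn.pendulum_of_remainder {α : ℝ} {e : ℝ → ℝ} {s : Set ℝ} (hs : s ⊆ Ioi 0)
    (he : SolvesEulerOn (pendulumRemainder ℓ α) e s) (n : ℤ) :
    SolvesEulerOn (fun _ => pendulumForce ℓ)
      (fun x => n * Real.pi + (e x - α * x ^ (ℓ + 1))) s := by
  obtain ⟨e', he'⟩ := he
  refine ⟨fun x => e' x - α * ((ℓ + 1) * x ^ ℓ), fun x hx => ⟨?_, ?_⟩⟩
  · have hpow := (Real.hasDerivAt_rpow_const (p := ℓ + 1) (.inl (ne_of_gt (hs hx)))).const_mul α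
    rw [add_sub_cancel_right] at hpow
    exact ((he' x hx).1.fun_sub hpow).const_add _
  · have hpow := ((Real.hasDerivAt_rpow_const (p := ℓ)
      (.inl (ne_of_gt (hs hx)))).const_mul (ℓ + 1)).const_mul α
    refine ((he' x hx).2.fun_sub hpow).congr_deriv ?_
    have hx0 : x ≠ 0 := ne_of_gt (hs hx)
    simp only [eulerSource, smul_eq_mul, pendulumRemainder, pendulumForce_int_mul_pi_add,
      Real.rpow_add_one hx0, Real.rpow_sub_one hx0]
    field_simp
    ring

theorem toNNReal_mul_succ_lt (hℓ : 0 ≤ ℓ) :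
    (ℓ * (ℓ + 1)).toNNReal < 3 * (ℓ + 1) * (3 * (ℓ + 1) - 1) := by
  rw [Real.coe_toNNReal _ (by positivity)]
  nlinarith

theorem exists_solvesEulerOn_pendulumForce (hℓ : 0 ≤ ℓ) (n : ℤ) (α : ℝ) :
    ∃ ψ : ℝ → ℝ, SolvesEulerOn (fun _ => pendulumForce ℓ) ψ (Ioi 0) ∧ ∀ x, 0 < x →
      |ψ x - (n * Real.pi - α * x ^ (ℓ + 1))| ≤
        ℓ / (3 * (4 * ℓ + 3)) * |α| ^ 3 * x ^ (3 * (ℓ + 1)) := by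
  obtain ⟨e, he, hbound⟩ := exists_solvesEulerOn (continuousOn_pendulumRemainder α)
    (fun x _ => lipschitzWith_pendulumRemainder hℓ α x)
    (fun x hx => norm_pendulumRemainder_zero_le hℓ α hx) (by linarith) (toNNReal_mul_succ_lt hℓ)
  refine ⟨_, he.pendulum_of_remainder le_rfl n, fun x hx => ?_⟩
  convert hbound x hx using 2
  · rw [Real.norm_eq_abs]
    ring_nf
  · have hindicial : 3 * (ℓ + 1) * (3 * (ℓ + 1) - 1) - ℓ * (ℓ + 1) =
        2 * (ℓ + 1) * (4 * ℓ + 3) := by ring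
    rw [Real.coe_toNNReal _ (by positivity), hindicial]
    field_simp

end PendulumForce

section HarmonicMap

variable {ℓ : ℝ} {Q Q₁ Q₂ ψ : ℝ → ℝ}

/-- `Q` is the radial profile of an `ℓ`-equivariant harmonic map from the exterior of the unit ball
to `S³`, with `ℓ` allowed to be real. As `deriv` is two-sided, the equation at `r = 1` also involves
the values of `Q` to the left of `1`. -/
def IsExteriorHarmonicMap (ℓ : ℝ) (Q : ℝ → ℝ) : Prop :=
  ContDiffOn ℝ 2 Q (Ici 1) ∧ ∀ r, 1 ≤ r →
    deriv (deriv Q) r + (2 / r) * deriv Q r = (ℓ * (ℓ + 1) / (2 * r ^ 2)) * Real.sin (2 * Q r)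

theorem SolvesEulerOn.isExteriorHarmonicMap
    (hψ : SolvesEulerOn (fun _ => pendulumForce ℓ) ψ (Ioi 0)) :
    IsExteriorHarmonicMap ℓ fun r => ψ r⁻¹ := by
  have hsmooth : ContDiffOn ℝ 2 ψ (Ioi 0) := hψ.contDiffOn_two isOpen_Ioi le_rfl
    (continuous_pendulumForce.comp continuous_snd).continuousOn
  obtain ⟨ψ', hψ'⟩ := hψ
  have hpos {r : ℝ} (hr : 1 ≤ r) : 0 < r := one_pos.trans_le hr
  refine ⟨hsmooth.comp ((contDiffOn_inv ℝ).mono fun r hr => (hpos hr).ne')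
    fun r hr => inv_pos.2 (hpos hr), fun r hr => ?_⟩
  have hderiv : deriv (fun r => ψ r⁻¹) =ᶠ[𝓝 r] fun r => -ψ' r⁻¹ / r ^ 2 := by
    filter_upwards [Ioi_mem_nhds (hpos hr)] with t ht using
      (hasDerivAt_comp_inv (hψ' t⁻¹ (inv_pos.2 ht : 0 < t⁻¹)).1 (ne_of_gt ht)).deriv
  have hderiv2 := hasDerivAt_deriv_comp_inv (hψ' r⁻¹ (inv_pos.2 (hpos hr) : 0 < r⁻¹)).2
    (hpos hr).ne'
  rw [hderiv.deriv_eq, hderiv.eq_of_nhds, hderiv2.deriv, eulerSource, pendulumForce, smul_eq_mul]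
  field_simp
  ring

theorem IsExteriorHarmonicMap.solvesEulerOn (hQ : IsExteriorHarmonicMap ℓ Q) :
    SolvesEulerOn (fun _ => pendulumForce ℓ) (fun x => Q x⁻¹) (Ioo 0 1) := by
  obtain ⟨hsmooth, hode⟩ := hQ
  have hsmooth' : ContDiffOn ℝ (1 + 1) Q (Ioi 1) := by
    rw [one_add_one_eq_two]
    exact hsmooth.mono Ioi_subset_Ici_self
  rw [contDiffOn_succ_iff_deriv_of_isOpen isOpen_Ioi] at hsmooth'
  refine ⟨fun x => -deriv Q x⁻¹ / x ^ 2, fun x hx => ?_⟩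
  have hx1 : 1 < x⁻¹ := (one_lt_inv₀ hx.1).2 hx.2
  have hx0 : x ≠ 0 := hx.1.ne'
  have hnhds : Ioi 1 ∈ 𝓝 x⁻¹ := Ioi_mem_nhds hx1
  have hd := (hsmooth'.1.differentiableAt hnhds).hasDerivAt
  have hd' := ((hsmooth'.2.2.differentiableOn one_ne_zero).differentiableAt hnhds).hasDerivAt
  refine ⟨hasDerivAt_comp_inv hd hx0, (hasDerivAt_deriv_comp_inv hd' hx0).congr_deriv ?_⟩
  rw [eq_sub_of_add_eq (hode x⁻¹ hx1.le), eulerSource, pendulumForce, smul_eq_mul]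
  field_simp
  ring

theorem IsExteriorHarmonicMap.eqOn (hℓ : 0 ≤ ℓ) (h₁ : IsExteriorHarmonicMap ℓ Q₁)
    (h₂ : IsExteriorHarmonicMap ℓ Q₂)
    (hO : (fun r => Q₁ r - Q₂ r) =O[atTop] fun r => r ^ (-(3 * (ℓ + 1)))) :
    EqOn Q₁ Q₂ (Ici 1) := by
  have hO' : (fun x => Q₁ x⁻¹ - Q₂ x⁻¹) =O[𝓝[>] 0] fun x => x ^ (3 * (ℓ + 1)) := by
    refine (hO.comp_tendsto tendsto_inv_nhdsGT_zero).congr' .rfl ?_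
    filter_upwards [self_mem_nhdsWithin] with x hx
    rw [comp_apply, Real.rpow_neg (inv_nonneg.2 (le_of_lt hx)), Real.inv_rpow (le_of_lt hx),
      inv_inv]
  have heq := h₁.solvesEulerOn.eqOn h₂.solvesEulerOn
    (continuous_pendulumForce.comp continuous_snd).continuousOn
    (fun _ _ => lipschitzWith_pendulumForce hℓ) (by linarith) (toNNReal_mul_succ_lt hℓ) hO'
  refine EqOn.of_subset_closure (s := Ioi 1) (fun r hr => ?_) h₁.1.continuousOn
    h₂.1.continuousOn Ioi_subset_Ici_self (closure_Ioi (1 : ℝ)).ge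
  simpa only [inv_inv] using heq ⟨inv_pos.2 (one_pos.trans hr), inv_lt_one_of_one_lt₀ hr⟩

theorem exists_isExteriorHarmonicMap (hℓ : 0 ≤ ℓ) (n : ℤ) (α : ℝ) :
    ∃ Q, IsExteriorHarmonicMap ℓ Q ∧ ∀ r, 0 < r →
      |Q r - (n * Real.pi - α / r ^ (ℓ + 1))| ≤
        ℓ / (3 * (4 * ℓ + 3)) * |α| ^ 3 * r ^ (-(3 * (ℓ + 1))) := by
  obtain ⟨ψ, hψ, hbound⟩ := exists_solvesEulerOn_pendulumForce hℓ n α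
  refine ⟨_, hψ.isExteriorHarmonicMap, fun r hr => ?_⟩
  simpa only [Real.inv_rpow hr.le, Real.rpow_neg hr.le, div_eq_mul_inv] using
    hbound r⁻¹ (inv_pos.2 hr)

end HarmonicMap

theorem exterior_harmonic_map_exists_unique_general {ℓ : ℝ} (hℓ : 0 ≤ ℓ) (n : ℤ) (α : ℝ) :
    ∃ Q : ℝ → ℝ,
      (IsExteriorHarmonicMap ℓ Q ∧
        (fun r : ℝ => Q r - (n * Real.pi - α / r ^ (ℓ + 1))) =O[atTop]
          (fun r : ℝ => r ^ (-(3 * (ℓ + 1)))) ∧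
        (α = 0 → ∀ r : ℝ, 1 ≤ r → Q r = n * Real.pi)) ∧
      ∀ Q' : ℝ → ℝ,
        (IsExteriorHarmonicMap ℓ Q' ∧
          (fun r : ℝ => Q' r - (n * Real.pi - α / r ^ (ℓ + 1))) =O[atTop]
            (fun r : ℝ => r ^ (-(3 * (ℓ + 1))))) →
        EqOn Q Q' (Ici 1) := by
  obtain ⟨Q, hQ, hbound⟩ := exists_isExteriorHarmonicMap hℓ n α
  have hasymp : (fun r : ℝ => Q r - (n * Real.pi - α / r ^ (ℓ + 1))) =O[atTop]
      (fun r : ℝ => r ^ (-(3 * (ℓ + 1)))) := by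
    refine IsBigO.of_bound (ℓ / (3 * (4 * ℓ + 3)) * |α| ^ 3) ?_
    filter_upwards [eventually_gt_atTop 0] with r hr
    rw [Real.norm_of_nonneg (Real.rpow_nonneg hr.le _)]
    exact hbound r hr
  refine ⟨Q, ⟨hQ, hasymp, ?_⟩, fun Q' ⟨hQ', hasymp'⟩ => hQ.eqOn hℓ hQ' ?_⟩
  · rintro rfl r hr
    simpa [sub_eq_zero] using hbound r (one_pos.trans_le hr)
  · simpa only [sub_sub_sub_cancel_right] using hasymp.sub hasymp'

/-- Existence and uniqueness of exterior harmonic maps with prescribed asymptotics: for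
`ℓ ≥ 1`, `n ∈ ℕ`, and `α ∈ ℝ`, there is a unique (on `[1,∞)`) C² solution `Q` of
`Q'' + (2/r) Q' = (ℓ(ℓ+1)/(2r²)) sin(2Q)` with
`Q r = nπ - α/r^(ℓ+1) + O(r^(-3(ℓ+1)))` as `r → ∞`; the error vanishes when `α = 0`. -/
theorem exterior_harmonic_map_exists_unique (ℓ n : ℕ) (hℓ : 0 < ℓ) (α : ℝ) :
    ∃ Q : ℝ → ℝ,
      (ContDiffOn ℝ 2 Q (Set.Ici 1) ∧
        (∀ r : ℝ, 1 ≤ r →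
          deriv (deriv Q) r + (2 / r) * deriv Q r =
            ((ℓ : ℝ) * ((ℓ : ℝ) + 1) / (2 * r ^ 2)) * Real.sin (2 * Q r)) ∧
        (fun r : ℝ => Q r - ((n : ℝ) * Real.pi - α / r ^ (ℓ + 1))) =O[atTop]
          (fun r : ℝ => r ^ (-(3 * ((ℓ : ℝ) + 1)))) ∧
        (α = 0 → ∀ r : ℝ, 1 ≤ r → Q r = (n : ℝ) * Real.pi)) ∧
      ∀ Q' : ℝ → ℝ,
        (ContDiffOn ℝ 2 Q' (Set.Ici 1) ∧
          (∀ r : ℝ, 1 ≤ r →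
            deriv (deriv Q') r + (2 / r) * deriv Q' r =
              ((ℓ : ℝ) * ((ℓ : ℝ) + 1) / (2 * r ^ 2)) * Real.sin (2 * Q' r)) ∧
          (fun r : ℝ => Q' r - ((n : ℝ) * Real.pi - α / r ^ (ℓ + 1))) =O[atTop]
            (fun r : ℝ => r ^ (-(3 * ((ℓ : ℝ) + 1))))) →
        Set.EqOn Q Q' (Set.Ici 1) := by
  have h := exterior_harmonic_map_exists_unique_general ℓ.cast_nonneg n α
  simp only [IsExteriorHarmonicMap, and_assoc] at h ⊢
  exact_mod_cast h
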